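/- Let R be a henselian Gorenstein Noetherian local ring and 𝒳 a resolving subcategory of the category of finitely generated R-modules. If 0 → N → C → M → 0 is a short exact sequence of finitely generated R-modules such that C ∈ 𝒞(𝒳) and both M and N admit right 𝒳-approximations, then M ∈ 𝒞(𝒳). -/

import Mathlib

open CategoryTheory IsLocalRing

universe u

noncomputable section

/-- The `i`-th Ext module of two `R`-modules. -/
abbrev ExtMod (R : Type u) [CommRing R] (i : ℕ) (M N : ModuleCat.{u} R) : ModuleCat R :=
  ((Ext R (ModuleCat.{u} R) i).obj (Opposite.op M)).obj N

/-- Vanishing of the `i`-th Ext module: `Ext_R^i(M, N) = 0`. -/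
def ExtVanish (R : Type u) [CommRing R] (i : ℕ) (M N : ModuleCat.{u} R) : Prop :=
  Subsingleton (ExtMod R i M N)

variable (R : Type u) [CommRing R]

/-- `0 → A → B → C → 0` is a short exact sequence. -/
def IsSES {A B C : ModuleCat.{u} R} (f : A →ₗ[R] B) (g : B →ₗ[R] C) : Prop :=
  Function.Injective f ∧ Function.Exact f g ∧ Function.Surjective g

/-- A resolving subcategory of the category of finitely generated `R`-modules. -/
structure IsResolving (𝒳 : Set (ModuleCat.{u} R)) : Prop where
  finite : ∀ M ∈ 𝒳, Module.Finite R M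
  isoClosed : ∀ {M N : ModuleCat.{u} R}, M ∈ 𝒳 → (↥M ≃ₗ[R] ↥N) → N ∈ 𝒳
  freeMem : ∀ M : ModuleCat.{u} R, Module.Finite R M → Module.Free R M → M ∈ 𝒳
  summandClosed : ∀ M N : ModuleCat.{u} R, ModuleCat.of R (↥M × ↥N) ∈ 𝒳 → M ∈ 𝒳
  extClosed : ∀ (A B C : ModuleCat.{u} R) (f : A →ₗ[R] B) (g : B →ₗ[R] C),
    IsSES R f g → A ∈ 𝒳 → C ∈ 𝒳 → B ∈ 𝒳
  kerClosed : ∀ (A B C : ModuleCat.{u} R) (f : A →ₗ[R] B) (g : B →ₗ[R] C),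
    IsSES R f g → B ∈ 𝒳 → C ∈ 𝒳 → A ∈ 𝒳

/-- `f : X → M` is a right `𝒳`-approximation of `M`. -/
def IsRightApprox (𝒳 : Set (ModuleCat.{u} R)) {X M : ModuleCat.{u} R} (f : X →ₗ[R] M) : Prop :=
  X ∈ 𝒳 ∧ ∀ W ∈ 𝒳, ∀ g : ↥W →ₗ[R] ↥M, ∃ h : ↥W →ₗ[R] ↥X, f ∘ₗ h = g

/-- `M` admits a right `𝒳`-approximation. -/
def HasRightApprox (𝒳 : Set (ModuleCat.{u} R)) (M : ModuleCat.{u} R) : Prop :=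
  ∃ (X : ModuleCat.{u} R) (f : X →ₗ[R] M), IsRightApprox R 𝒳 f

/-- `𝒳` is contravariantly infinite: no finitely generated module outside `𝒳` admits
a right `𝒳`-approximation. -/
def ContravariantlyInfinite (𝒳 : Set (ModuleCat.{u} R)) : Prop :=
  ∀ M : ModuleCat.{u} R, Module.Finite R M → M ∉ 𝒳 → ¬ HasRightApprox R 𝒳 M

/-- `𝒳` is contravariantly finite: every finitely generated module admits
a right `𝒳`-approximation. -/
def ContravariantlyFinite (𝒳 : Set (ModuleCat.{u} R)) : Prop :=
  ∀ M : ModuleCat.{u} R, Module.Finite R M → HasRightApprox R 𝒳 M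

/-- The restricted functor `Hom_R(-, C)|_𝒳` is finitely presented, i.e. `C ∈ 𝒞(𝒳)`. -/
def MemCC (𝒳 : Set (ModuleCat.{u} R)) (C : ModuleCat.{u} R) : Prop :=
  ∃ (X₀ X₁ : ModuleCat.{u} R) (g : ↥X₁ →ₗ[R] ↥X₀) (f : ↥X₀ →ₗ[R] ↥C), X₀ ∈ 𝒳 ∧ X₁ ∈ 𝒳 ∧
    ∀ W ∈ 𝒳, Function.Surjective (fun h : ↥W →ₗ[R] ↥X₀ => f ∘ₗ h) ∧
      Function.Exact (fun h : ↥W →ₗ[R] ↥X₁ => g ∘ₗ h) (fun h : ↥W →ₗ[R] ↥X₀ => f ∘ₗ h)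

/-- `𝒳` is coherent: `𝒞(𝒳) = rap 𝒳`. -/
def Coherent (𝒳 : Set (ModuleCat.{u} R)) : Prop :=
  ∀ M : ModuleCat.{u} R, Module.Finite R M → (MemCC R 𝒳 M ↔ HasRightApprox R 𝒳 M)

/-- The right Ext-orthogonal class `𝒳^⊥` of a class `𝒳` of finitely generated modules. -/
def XPerp (𝒳 : Set (ModuleCat.{u} R)) : Set (ModuleCat.{u} R) :=
  {Y | Module.Finite R Y ∧ ∀ X ∈ 𝒳, ∀ i, 0 < i → ExtVanish R i X Y}

/-- The projective dimension of `M` is at most `n`. -/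
def ProjDimLE (M : ModuleCat.{u} R) (n : ℕ) : Prop :=
  ∀ N : ModuleCat.{u} R, ∀ i, n < i → ExtVanish R i M N

/-- The depth of an `R`-module over a local ring: `inf { i | Ext^i(k, M) ≠ 0 }`. -/
def moduleDepth [IsLocalRing R] (M : ModuleCat.{u} R) : ℕ∞ :=
  sInf ((fun i : ℕ => (i : ℕ∞)) ''
    {i : ℕ | ¬ ExtVanish R i (ModuleCat.of R (ResidueField R)) M})

/-- `M` is a maximal Cohen–Macaulay `R`-module: `depth M ≥ dim R`. -/
def IsMCM [IsLocalRing R] (M : ModuleCat.{u} R) : Prop :=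
  ringKrullDim R ≤ (moduleDepth R M : WithBot ℕ∞)

/-- A Gorenstein local ring: `∃ n, Ext^i(M, R) = 0` for every finitely generated `M`
and every `i > n`. -/
def IsGorensteinLocalRing : Prop :=
  ∃ n : ℕ, ∀ M : ModuleCat.{u} R, Module.Finite R M →
    ∀ i, n < i → ExtVanish R i M (ModuleCat.of R R)

/-- A regular local ring: Noetherian local with `dim R = dim_k 𝔪/𝔪²`. -/
def IsRegularLocal [IsLocalRing R] : Prop :=
  IsNoetherianRing R ∧
    ringKrullDim R = (Module.finrank (ResidueField R) (CotangentSpace R) : ℕ)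

/-- Witness that the local ring `R` is a complete intersection: its `𝔪`-adic completion
is `Q/(f₁, …, f_c)` for a regular local ring `Q` and a `Q`-regular sequence `f₁, …, f_c`. -/
structure CompleteIntersectionWitness [IsLocalRing R] : Type (u + 1) where
  Q : Type u
  [commRing : CommRing Q]
  [localRing : IsLocalRing Q]
  regular : IsRegularLocal Q
  fs : List Q
  regSeq : RingTheory.Sequence.IsRegular Q fs
  equiv : AdicCompletion (maximalIdeal R) R ≃+* Q ⧸ Ideal.span {x : Q | x ∈ fs}

/-- The local ring `R` is a complete intersection. -/
def IsCompleteIntersection [IsLocalRing R] : Prop :=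
  Nonempty (CompleteIntersectionWitness R)

end
section henselAux
open Polynomial

theorem etale_section {R : Type u} [CommRing R] [HenselianLocalRing R]
    {A : Type u} [CommRing A] [Algebra R A] [Algebra.Etale R A]
    (ρ : A →ₐ[R] ResidueField R) :
    ∃ σ : A →ₐ[R] R, ∀ x, residue R (σ x) = ρ x := by
  let Q : Ideal A := RingHom.ker ρ
  have hQ : Q.IsPrime := RingHom.ker_isPrime _
  obtain ⟨f, hf, hst⟩ := Algebra.IsEtaleAt.exists_isStandardEtale (R := R) Q
  obtain ⟨P⟩ := hst.nonempty_standardEtalePresentation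
  have hfu : IsUnit (ρ f) := by
    rw [isUnit_iff_ne_zero]
    intro h; exact hf h
  let ρ' : Localization.Away f →ₐ[R] ResidueField R :=
    IsLocalization.Away.liftAlgHom f (f := ρ) hfu
  have hm := P.hasMap.map ρ'
  have hd := hm.isUnit_derivative_f
  have H2 := ((HenselianLocalRing.TFAE R).out 0 1).mp (inferInstance : HenselianLocalRing R)
  obtain ⟨a, ha, ha'⟩ := H2 P.f P.monic_f (ρ' P.x) hm.1 hd.ne_zero
  have hres : ∀ q : R[X], residue R (aeval a q) = aeval (ρ' P.x) q := by
    intro q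
    rw [← ha', ← ResidueField.algebraMap_eq, aeval_algebraMap_apply]
  have hg : IsUnit (aeval a P.g) := by
    have := hm.2
    rw [← hres] at this
    exact (isUnit_map_iff (residue R) _).mp this
  have hmap : P.P.HasMap a := ⟨by simpa [IsRoot] using ha, hg⟩
  let σ' : Localization.Away f →ₐ[R] R := (P.P.lift a hmap).comp P.equivRing.toAlgHom
  have hσ : (Algebra.ofId R (ResidueField R)).comp σ' = ρ' := by
    apply P.hom_ext
    simp [σ', Algebra.ofId_apply, ha']
  refine ⟨σ'.comp (IsScalarTower.toAlgHom R A _), fun x => ?_⟩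
  have := DFunLike.congr_fun hσ (algebraMap A _ x)
  simp only [ρ', AlgHom.comp_apply, Algebra.ofId_apply] at this
  simpa using this

theorem hensel_factor {R : Type u} [CommRing R] [HenselianLocalRing R]
    (p : R[X]) (hp : p.Monic) :
    ∃ P Q : R[X], p = P * Q ∧ IsCoprime P Q ∧ IsUnit (P.eval 1) ∧ IsUnit (Q.eval 0) := by
  have hp0 : p.map (residue R) ≠ 0 := (hp.map _).ne_zero
  obtain ⟨q, hq, hq'⟩ := Polynomial.exists_eq_pow_rootMultiplicity_mul_and_not_dvd
    (p.map (residue R)) hp0 0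
  set a := (p.map (residue R)).rootMultiplicity 0
  rw [C_0, sub_zero] at hq hq'
  have hXa : (X ^ a : (ResidueField R)[X]).Monic := monic_X_pow a
  have hqm : q.Monic := hXa.of_mul_monic_left (hq ▸ hp.map _)
  have hcop : IsCoprime (X ^ a : (ResidueField R)[X]) q :=
    IsCoprime.pow_left ((Polynomial.irreducible_X.coprime_iff_not_dvd).mpr hq')
  let e := UniversalCoprimeFactorizationRing.homEquiv (R := R) (ResidueField R)
    (X ^ a : (ResidueField R)[X]).natDegree q.natDegree (n := p.natDegree)
    (by rw [← hXa.natDegree_mul hqm, ← hq, hp.natDegree_map]) (.mk p hp rfl)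
  let ρ := e.symm ⟨(.mk _ hXa rfl, .mk q hqm rfl), hq.symm, hcop⟩
  obtain ⟨σ, hσ⟩ := etale_section ρ
  have hσ' : (Algebra.ofId R (ResidueField R)).comp σ = ρ := AlgHom.ext hσ
  let F := UniversalCoprimeFactorizationRing.homEquiv (R := R) R
    (X ^ a : (ResidueField R)[X]).natDegree q.natDegree (n := p.natDegree)
    (by rw [← hXa.natDegree_mul hqm, ← hq, hp.natDegree_map]) (.mk p hp rfl) σ
  have h1 := UniversalCoprimeFactorizationRing.homEquiv_comp_fst _ _ _ _ _ σ
    (Algebra.ofId R (ResidueField R))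
  have h2 := UniversalCoprimeFactorizationRing.homEquiv_comp_snd _ _ _ _ _ σ
    (Algebra.ofId R (ResidueField R))
  rw [hσ'] at h1 h2
  have h3 : e ρ = _ := e.apply_symm_apply _
  have h1' : (X ^ a : (ResidueField R)[X]) = F.1.1.1.map (residue R) := by
    have := congrArg Subtype.val h1
    change (e ρ).1.1.1 = _ at this
    rw [h3] at this
    exact this
  have h2' : q = F.1.2.1.map (residue R) := by
    have := congrArg Subtype.val h2
    change (e ρ).1.2.1 = _ at this
    rw [h3] at this
    exact this
  refine ⟨F.1.1.1, F.1.2.1, ?_, F.2.2, ?_, ?_⟩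
  · have := F.2.1
    rw [this]; simp
  · rw [← isUnit_map_iff (residue R), ← eval_map_apply, ← h1']; simp
  · rw [← isUnit_map_iff (residue R), ← eval_map_apply, ← h2', isUnit_iff_ne_zero, map_zero]
    intro h
    exact hq' (Polynomial.X_dvd_iff.mpr (by rwa [coeff_zero_eq_eval_zero]))

theorem fitting_aux {R : Type u} [CommRing R] [HenselianLocalRing R]
    {Z N : Type u} [AddCommGroup Z] [Module R Z] [Module.Finite R Z]
    [AddCommGroup N] [Module R N] (f : Z →ₗ[R] N) (φ : Module.End R Z) (hφ : f ∘ₗ φ = f) :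
    ∃ e : Module.End R Z, e * e = e ∧ f ∘ₗ e = f ∧ (e = 1 → Function.Bijective φ) := by
  obtain ⟨p, hp, hpφ⟩ := Algebra.IsIntegral.isIntegral (R := R) φ
  obtain ⟨P, Q, rfl, ⟨u, v, huv⟩, hP, hQ⟩ := hensel_factor p hp
  change aeval φ (P * Q) = 0 at hpφ
  have key : ∀ (q : R[X]), f ∘ₗ (aeval φ q) = q.eval 1 • f := by
    intro q
    induction q using Polynomial.induction_on' with
    | add a b ha hb => rw [map_add, LinearMap.comp_add, ha, hb, eval_add, add_smul]
    | monomial n a =>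
      rw [aeval_monomial, eval_monomial, one_pow, mul_one]
      have : ∀ n : ℕ, f ∘ₗ (φ ^ n) = f := by
        intro n
        induction n with
        | zero => rfl
        | succ n ih => rw [pow_succ, Module.End.mul_eq_comp, ← LinearMap.comp_assoc, ih, hφ]
      ext z
      have h := LinearMap.congr_fun (this n) z
      simp only [LinearMap.comp_apply] at h
      simp [Module.algebraMap_end_apply, h]
  refine ⟨aeval φ (u * P), ?_, ?_, ?_⟩
  · rw [← map_mul]
    have : u * P * (u * P) = u * P - (u * v) * (P * Q) := by linear_combination (u * P) * huv
    rw [this, map_sub, map_mul _ (u * v), hpφ, mul_zero, sub_zero]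
  · have h0 : Q.eval 1 • f = 0 := by
      have := key (P * Q)
      rw [hpφ, eval_mul, mul_smul] at this
      simp only [LinearMap.comp_zero] at this
      exact (hP.smul_eq_zero).mp this.symm
    rw [key]
    have := congrArg (eval 1) huv
    simp only [eval_add, eval_mul, eval_one] at this
    have h2 : (u * P).eval 1 = 1 - v.eval 1 * Q.eval 1 := by
      rw [eval_mul]; linear_combination this
    rw [h2, sub_smul, mul_smul, h0, smul_zero, one_smul, sub_zero]
  · intro h
    have hQ0 : aeval φ Q = 0 := by
      have : aeval φ (u * (P * Q)) = aeval φ (u * P) * aeval φ Q := by rw [← map_mul]; ring_nf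
      rw [h, one_mul, map_mul, hpφ, mul_zero] at this
      exact this.symm
    have hdec := Polynomial.divX_mul_X_add Q
    rw [coeff_zero_eq_eval_zero] at hdec
    obtain ⟨c, hc⟩ := hQ
    rw [← hc] at hdec
    have h1 : aeval φ Q.divX * φ + algebraMap R _ (c : R) = 0 := by
      have := congrArg (aeval φ) hdec
      rw [hQ0] at this
      simpa using this
    have h2 : φ * aeval φ Q.divX + algebraMap R _ (c : R) = 0 := by
      rw [← h1]; congr 1
      conv_lhs => rw [← aeval_X (R := R) φ]
      conv_rhs => rw [← aeval_X (R := R) φ]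
      simp only [aeval_X]
      have := congrArg (aeval φ) (mul_comm (X : R[X]) Q.divX)
      simpa using this
    constructor
    · rw [injective_iff_map_eq_zero]
      intro z hz
      have := LinearMap.congr_fun h1 z
      simp [hz, Module.algebraMap_end_apply] at this
      exact this
    · intro z
      have := LinearMap.congr_fun h2 (-((↑c⁻¹ : R) • z))
      simp only [LinearMap.add_apply, Module.End.mul_apply, Module.algebraMap_end_apply,
        LinearMap.zero_apply, smul_neg, smul_smul, Units.mul_inv, one_smul] at this
      exact ⟨_, by rwa [← sub_eq_add_neg, sub_eq_zero] at this⟩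
end henselAux

section approxAux

theorem exists_min_approx (R : Type u) [CommRing R] [IsNoetherianRing R]
    [HenselianLocalRing R] (𝒳 : Set (ModuleCat.{u} R)) (h𝒳 : IsResolving R 𝒳)
    (N : ModuleCat.{u} R) (hN : HasRightApprox R 𝒳 N) :
    ∃ (Z : ModuleCat.{u} R) (f : Z →ₗ[R] N), IsRightApprox R 𝒳 f ∧
      ∀ φ : Z →ₗ[R] Z, f ∘ₗ φ = f → Function.Bijective φ := by
  obtain ⟨Z, f, hZ, hf⟩ := hN
  have hfin := h𝒳.finite Z hZ
  let S : Set (Submodule R Z) :=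
    {K | ∃ e : Module.End R Z, e * e = e ∧ f ∘ₗ e = f ∧ LinearMap.ker e = K}
  have hS : S.Nonempty := ⟨⊥, 1, by simp, rfl, by
    rw [LinearMap.ker_eq_bot]; exact Function.injective_id⟩
  obtain ⟨K, ⟨e, hee, hfe, rfl⟩, hmax⟩ := set_has_maximal_iff_noetherian.mpr
    (inferInstance : IsNoetherian R Z) S hS
  have hee' : ∀ z, e (e z) = e z := fun z => LinearMap.congr_fun hee z
  have hfe' : ∀ z, f (e z) = f z := fun z => LinearMap.congr_fun hfe z
  let er : Z →ₗ[R] LinearMap.range e := e.rangeRestrict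
  have her : ∀ x : LinearMap.range e, er x.1 = x := by
    rintro ⟨_, z, rfl⟩
    exact Subtype.ext (hee' z)
  let f1 : LinearMap.range e →ₗ[R] N := f ∘ₗ (LinearMap.range e).subtype
  refine ⟨ModuleCat.of R (LinearMap.range e), f1, ⟨?_, ?_⟩, ?_⟩
  · refine h𝒳.summandClosed (ModuleCat.of R (LinearMap.range e))
      (ModuleCat.of R (LinearMap.ker e)) (h𝒳.isoClosed hZ ?_)
    have hk : ∀ z, z - e z ∈ LinearMap.ker e := fun z => by simp [hee']
    exact LinearEquiv.ofLinearMap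
      (er.prod ((LinearMap.id - e).codRestrict (LinearMap.ker e) hk))
      ((LinearMap.range e).subtype.coprod (LinearMap.ker e).subtype)
      (by
        apply LinearMap.ext
        rintro ⟨x, y⟩
        have hy : e y.1 = 0 := y.2
        have hx : e x.1 = x.1 := congrArg Subtype.val (her x)
        apply Prod.ext <;> apply Subtype.ext
        · change e (x.1 + y.1) = x.1
          rw [map_add, hy, hx, add_zero]
        · change (x.1 + y.1) - e (x.1 + y.1) = y.1
          rw [map_add, hy, hx]; abel)
      (by
        apply LinearMap.ext
        intro z
        change e z + (z - e z) = z
        abel)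
  · intro W hW g
    obtain ⟨h, rfl⟩ := hf W hW g
    refine ⟨er ∘ₗ h, ?_⟩
    apply LinearMap.ext
    intro w
    exact hfe' _
  · intro φ hφ
    obtain ⟨e', he1, he2, he3⟩ := fitting_aux f1 φ hφ
    apply he3
    have he1' : ∀ z, e' (e' z) = e' z := fun z => LinearMap.congr_fun he1 z
    have he2' : ∀ z, f (e' z).1 = f z.1 := fun z => LinearMap.congr_fun he2 z
    let e'' : Module.End R Z := (LinearMap.range e).subtype ∘ₗ e' ∘ₗ er
    have hin : LinearMap.ker e'' ∈ S := by
      refine ⟨e'', ?_, ?_, rfl⟩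
      · apply LinearMap.ext
        intro z
        change (e' (er (e' (er z)).1)).1 = (e' (er z)).1
        rw [her, he1']
      · apply LinearMap.ext
        intro z
        change f (e' (er z)).1 = f z
        rw [he2']
        exact hfe' z
    have hle : LinearMap.ker e ≤ LinearMap.ker e'' := by
      intro z hz
      have : er z = 0 := Subtype.ext hz
      change (e' (er z)).1 = 0
      rw [this, map_zero]; rfl
    have heq : LinearMap.ker e = LinearMap.ker e'' := by
      by_contra hne
      exact hmax _ hin (lt_of_le_of_ne hle hne)
    have hinj : ∀ x, e' x = 0 → x = 0 := by
      intro x hx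
      have : x.1 ∈ LinearMap.ker e'' := by
        change (e' (er x.1)).1 = 0
        rw [her, hx]; rfl
      rw [← heq] at this
      have h2 : er x.1 = 0 := Subtype.ext this
      rwa [her] at h2
    apply LinearMap.ext
    intro x
    have : e' (e' x - x) = 0 := by rw [map_sub, he1', sub_self]
    exact sub_eq_zero.mp (hinj _ this)

theorem rap_extension (R : Type u) [CommRing R] [IsNoetherianRing R]
    [HenselianLocalRing R] (𝒳 : Set (ModuleCat.{u} R)) (h𝒳 : IsResolving R 𝒳)
    (N P Y : ModuleCat.{u} R) (i : N →ₗ[R] P) (π : P →ₗ[R] Y) (hs : IsSES R i π)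
    (hY : Y ∈ 𝒳) (hN : HasRightApprox R 𝒳 N) : HasRightApprox R 𝒳 P := by
  obtain ⟨Z, f, ⟨hZ, hf⟩, hmin⟩ := exists_min_approx R 𝒳 h𝒳 N hN
  obtain ⟨hi, hex, hπ⟩ := hs
  have hπi : ∀ n, π (i n) = 0 := fun n => (hex _).mpr ⟨n, rfl⟩
  have hYf := h𝒳.finite Y hY
  obtain ⟨n, d, hd⟩ := Module.Finite.exists_fin' R Y
  let F := Fin n → R
  let K := LinearMap.ker d
  have hF : ModuleCat.of R F ∈ 𝒳 := h𝒳.freeMem _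
    (inferInstanceAs (Module.Finite R F)) (inferInstanceAs (Module.Free R F))
  have hK : ModuleCat.of R K ∈ 𝒳 := by
    refine h𝒳.kerClosed (ModuleCat.of R K) (ModuleCat.of R F) Y K.subtype d
      ⟨Subtype.val_injective, ?_, hd⟩ hF hY
    exact LinearMap.exact_subtype_ker_map d
  obtain ⟨s, hs⟩ := Module.projective_lifting_property π d hπ
  have hs' : ∀ x, π (s x) = d x := fun x => LinearMap.congr_fun hs x
  let ie : N ≃ₗ[R] LinearMap.range i := LinearEquiv.ofInjective i hi
  -- lift a map landing in the kernel of π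
  have hlift : ∀ (V : Type u) [AddCommGroup V] [Module R V] (t : V →ₗ[R] P),
      (∀ v, π (t v) = 0) → ∃ t' : V →ₗ[R] N, ∀ v, i (t' v) = t v := by
    intro V _ _ t ht
    refine ⟨ie.symm.toLinearMap ∘ₗ t.codRestrict (LinearMap.range i)
      (fun v => (hex _).mp (ht v)), fun v => ?_⟩
    have := ie.apply_symm_apply (t.codRestrict (LinearMap.range i)
      (fun v => (hex _).mp (ht v)) v)
    exact congrArg Subtype.val this
  obtain ⟨t, ht⟩ := hlift K (s ∘ₗ K.subtype) (fun k => by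
    change π (s k.1) = 0
    rw [hs']; exact k.2)
  obtain ⟨t', ht'⟩ := hf (ModuleCat.of R K) hK t
  have ht'' : ∀ k : K, f (t' k) = t k := fun k => LinearMap.congr_fun ht' k
  let j : K →ₗ[R] (Z × F) := LinearMap.prod t' (-K.subtype)
  let Q := (Z × F) ⧸ LinearMap.range j
  let ρ : Q →ₗ[R] P := (LinearMap.range j).liftQ ((i ∘ₗ f).coprod s) (by
    rintro _ ⟨k, rfl⟩
    change i (f (t' k)) + s (-k.1) = 0
    rw [ht'', ht, map_neg]
    exact add_neg_cancel _)
  let δ : Q →ₗ[R] Y := (LinearMap.range j).liftQ (d ∘ₗ LinearMap.snd R Z F) (by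
    rintro _ ⟨k, rfl⟩
    change d (-k.1) = 0
    rw [map_neg, neg_eq_zero]; exact k.2)
  let ι : Z →ₗ[R] Q := (LinearMap.range j).mkQ ∘ₗ LinearMap.inl R Z F
  have hρι : ∀ z, ρ (ι z) = i (f z) := fun z => by
    change i (f z) + s 0 = _
    rw [map_zero, add_zero]
  have hδι : ∀ z, δ (ι z) = 0 := fun z => map_zero d
  have hπρ : ∀ q, π (ρ q) = δ q := by
    intro q
    obtain ⟨⟨z, x⟩, rfl⟩ := (LinearMap.range j).mkQ_surjective q
    change π (i (f z) + s x) = d x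
    rw [map_add, hπi, hs', zero_add]
  have hιinj : Function.Injective ι := by
    rw [injective_iff_map_eq_zero]
    intro z hz
    have : ((z, 0) : Z × F) ∈ LinearMap.range j :=
      (Submodule.Quotient.mk_eq_zero _).mp hz
    obtain ⟨k, hk⟩ := this
    have h1 : t' k = z := congrArg Prod.fst hk
    have h2 : -k.1 = 0 := congrArg Prod.snd hk
    have h3 : k = 0 := Subtype.ext (neg_eq_zero.mp h2)
    rw [← h1, h3, map_zero]
  have hιex : ∀ q, δ q = 0 → ∃ z, ι z = q := by
    intro q hq
    obtain ⟨⟨z, x⟩, rfl⟩ := (LinearMap.range j).mkQ_surjective q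
    have hx : d x = 0 := hq
    refine ⟨z + t' ⟨x, hx⟩, ?_⟩
    refine (Submodule.Quotient.eq _).mpr ⟨⟨x, hx⟩, ?_⟩
    apply Prod.ext
    · change t' ⟨x, hx⟩ = z + t' ⟨x, hx⟩ - z
      abel
    · change -x = 0 - x
      simp
  have hδ : Function.Surjective δ := by
    intro y
    obtain ⟨x, rfl⟩ := hd y
    exact ⟨(LinearMap.range j).mkQ (0, x), rfl⟩
  have hQ : ModuleCat.of R Q ∈ 𝒳 :=
    h𝒳.extClosed Z (ModuleCat.of R Q) Y ι δ
      ⟨hιinj, fun q => ⟨hιex q, by rintro ⟨z, rfl⟩; exact hδι z⟩, hδ⟩ hZ hY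
  refine ⟨ModuleCat.of R Q, ρ, hQ, ?_⟩
  intro W hW h
  let E : Submodule R (W × Q) := LinearMap.ker
    ((π ∘ₗ h) ∘ₗ LinearMap.fst R W Q - δ ∘ₗ LinearMap.snd R W Q)
  have hE : ∀ w q, (w, q) ∈ E ↔ π (h w) = δ q := by
    intro w q
    simp [E, sub_eq_zero]
  let pr : E →ₗ[R] W := LinearMap.fst R W Q ∘ₗ E.subtype
  let qr : E →ₗ[R] Q := LinearMap.snd R W Q ∘ₗ E.subtype
  have hpq : ∀ x : E, π (h (pr x)) = δ (qr x) := fun x => (hE _ _).mp x.2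
  let κ : Z →ₗ[R] E := (LinearMap.inr R W Q ∘ₗ ι).codRestrict E (fun z => by
    refine (hE 0 (ι z)).mpr ?_
    rw [map_zero, map_zero, hδι])
  have hprκ : ∀ z, pr (κ z) = 0 := fun z => rfl
  have hqrκ : ∀ z, qr (κ z) = ι z := fun z => rfl
  have hκ : Function.Injective κ := fun a b hab => hιinj (congrArg qr hab)
  have hprs : Function.Surjective pr := by
    intro w
    obtain ⟨q, hq⟩ := hδ (π (h w))
    exact ⟨⟨(w, q), (hE _ _).mpr hq.symm⟩, rfl⟩
  have hexE : ∀ x, pr x = 0 → ∃ z, κ z = x := by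
    intro x hx
    have := hpq x
    rw [hx, map_zero, map_zero] at this
    obtain ⟨z, hz⟩ := hιex _ this.symm
    exact ⟨z, Subtype.ext (Prod.ext hx.symm hz)⟩
  have hEX : ModuleCat.of R E ∈ 𝒳 :=
    h𝒳.extClosed Z (ModuleCat.of R E) W κ pr
      ⟨hκ, fun q => ⟨hexE q, by rintro ⟨z, rfl⟩; rfl⟩, hprs⟩ hZ hW
  obtain ⟨θ, hθ⟩ := hlift E (ρ ∘ₗ qr - h ∘ₗ pr) (fun x => by
    change π (ρ (qr x) - h (pr x)) = 0
    rw [map_sub, hπρ, hpq, sub_self])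
  obtain ⟨η, hη⟩ := hf (ModuleCat.of R E) hEX θ
  have hη' : ∀ x : E, f (η x) = θ x := fun x => LinearMap.congr_fun hη x
  have hbij := hmin (η ∘ₗ κ) (by
    apply LinearMap.ext
    intro z
    change f (η (κ z)) = f z
    rw [hη']
    apply hi
    rw [hθ]
    change ρ (ι z) - h 0 = i (f z)
    rw [map_zero, sub_zero, hρι])
  let ηE : E →ₗ[R] Z := η
  let pk : LinearMap.ker ηE →ₗ[R] W := pr ∘ₗ (LinearMap.ker ηE).subtype
  have hpk : Function.Bijective pk := by
    constructor
    · rw [injective_iff_map_eq_zero]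
      intro x hx
      obtain ⟨z, hz⟩ := hexE x.1 hx
      have h1 : η (κ z) = 0 := by
        have := x.2
        rw [← hz] at this
        exact this
      have h2 : z = 0 := hbij.1 (a₁ := z) (a₂ := 0) (by
        change η (κ z) = η (κ 0)
        rw [h1, map_zero, map_zero])
      apply Subtype.ext
      rw [← hz, h2, map_zero]; rfl
    · intro w
      obtain ⟨x, rfl⟩ := hprs w
      obtain ⟨z, hz⟩ := hbij.2 (ηE x)
      refine ⟨⟨x - κ z, ?_⟩, ?_⟩
      · change ηE (x - κ z) = 0
        rw [map_sub, sub_eq_zero]; exact hz.symm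
      · change pr (x - κ z) = pr x
        rw [map_sub, hprκ, sub_zero]
  let pe := LinearEquiv.ofBijective pk hpk
  refine ⟨qr ∘ₗ (LinearMap.ker ηE).subtype ∘ₗ pe.symm.toLinearMap, ?_⟩
  apply LinearMap.ext
  intro w
  obtain ⟨x, rfl⟩ := pe.surjective w
  change ρ (qr (pe.symm (pe x)).1) = h (pr x.1)
  rw [pe.symm_apply_apply, ← sub_eq_zero]
  have h1 : f (ηE x.1) = θ x.1 := hη' x.1
  have h2 : ηE x.1 = 0 := x.2
  have h3 := hθ x.1
  rw [← h1, h2, map_zero, map_zero] at h3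
  exact h3.symm

theorem memCC_aux (R : Type u) [CommRing R] [IsNoetherianRing R]
    [HenselianLocalRing R] (𝒳 : Set (ModuleCat.{u} R)) (h𝒳 : IsResolving R 𝒳)
    (N C M : ModuleCat.{u} R) (f : ↥N →ₗ[R] ↥C) (g : ↥C →ₗ[R] ↥M)
    (hses : IsSES R f g) (hC : MemCC R 𝒳 C)
    (hM : HasRightApprox R 𝒳 M) (hN : HasRightApprox R 𝒳 N) :
    MemCC R 𝒳 M := by
  obtain ⟨Y, y, hY, hy⟩ := hM
  obtain ⟨X₀, X₁, g1, c, hX₀, hX₁, hcg⟩ := hC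
  obtain ⟨hf, hex, hg⟩ := hses
  have hgf : ∀ n, g (f n) = 0 := fun n => (hex _).mpr ⟨n, rfl⟩
  let P : Submodule R (C × Y) := LinearMap.ker
    (g ∘ₗ LinearMap.fst R C Y - y ∘ₗ LinearMap.snd R C Y)
  have hP : ∀ a b, (a, b) ∈ P ↔ g a = y b := by
    intro w q
    simp [P, sub_eq_zero]
  let pC : P →ₗ[R] C := LinearMap.fst R C Y ∘ₗ P.subtype
  let pY : P →ₗ[R] Y := LinearMap.snd R C Y ∘ₗ P.subtype
  have hpp : ∀ x : P, g (pC x) = y (pY x) := fun x => (hP _ _).mp x.2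
  let i : N →ₗ[R] P := (LinearMap.inl R C Y ∘ₗ f).codRestrict P (fun n => by
    refine (hP (f n) 0).mpr ?_
    rw [hgf, map_zero])
  have hses' : IsSES R (A := N) (B := ModuleCat.of R P) (C := Y) i pY := by
    refine ⟨fun a b hab => hf (congrArg pC hab), fun x => ⟨fun hx => ?_, ?_⟩, fun b => ?_⟩
    · have h1 : g (pC x) = 0 := by
        rw [hpp]
        have : pY x = 0 := hx
        rw [this, map_zero]
      obtain ⟨n, hn⟩ := (hex _).mp h1
      exact ⟨n, Subtype.ext (Prod.ext hn hx.symm)⟩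
    · rintro ⟨n, rfl⟩; rfl
    · obtain ⟨a, ha⟩ := hg (y b)
      exact ⟨⟨(a, b), (hP _ _).mpr ha⟩, rfl⟩
  obtain ⟨T, p, hT, hp⟩ := rap_extension R 𝒳 h𝒳 N (ModuleCat.of R P) Y i pY hses' hY hN
  let p' : T →ₗ[R] P := p
  obtain ⟨l₀, hl₀⟩ := hy X₀ hX₀ (g ∘ₗ c)
  have hl₀' : ∀ x, y (l₀ x) = g (c x) := fun x => LinearMap.congr_fun hl₀ x
  obtain ⟨α, hα⟩ := (hcg T hT).1 (pC ∘ₗ p')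
  have hα' : ∀ x, c (α x) = pC (p' x) := fun x => LinearMap.congr_fun hα x
  have hcg1 : ∀ x, c (g1 x) = 0 := by
    intro x
    have := ((hcg X₁ hX₁).2 (g1 ∘ₗ LinearMap.id)).mpr ⟨LinearMap.id, rfl⟩
    exact LinearMap.congr_fun this x
  refine ⟨Y, ModuleCat.of R (T × X₁),
    (pY ∘ₗ p' - l₀ ∘ₗ α).coprod (l₀ ∘ₗ g1), y, hY, ?_, ?_⟩
  · refine h𝒳.extClosed T (ModuleCat.of R (T × X₁)) X₁ (LinearMap.inl R T X₁)
      (LinearMap.snd R T X₁) ⟨LinearMap.inl_injective, ?_, LinearMap.snd_surjective⟩ hT hX₁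
    exact Function.Exact.inl_snd
  · intro W hW
    refine ⟨fun w => hy W hW w, fun w => ⟨fun hw => ?_, ?_⟩⟩
    · have hw' : ∀ x, y (w x) = 0 := fun x => LinearMap.congr_fun hw x
      let w1 : W →ₗ[R] P := (LinearMap.inr R C Y ∘ₗ w).codRestrict P (fun x => by
        refine (hP 0 (w x)).mpr ?_
        rw [hw', map_zero])
      obtain ⟨τ, hτ⟩ := hp W hW w1
      have hτ' : ∀ x, p' (τ x) = w1 x := fun x => LinearMap.congr_fun hτ x
      obtain ⟨β, hβ⟩ := ((hcg W hW).2 (α ∘ₗ τ)).mp (by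
        apply LinearMap.ext
        intro x
        change c (α (τ x)) = 0
        rw [hα', hτ']; rfl)
      have hβ' : ∀ x, g1 (β x) = α (τ x) := fun x => LinearMap.congr_fun hβ x
      refine ⟨LinearMap.prod τ β, ?_⟩
      apply LinearMap.ext
      intro x
      change (pY (p' (τ x)) - l₀ (α (τ x))) + l₀ (g1 (β x)) = w x
      rw [hβ', hτ', sub_add_cancel]; rfl
    · rintro ⟨v, rfl⟩
      apply LinearMap.ext
      intro x
      change y ((pY (p' (v x).1) - l₀ (α (v x).1)) + l₀ (g1 (v x).2)) = 0
      rw [map_add, map_sub, ← hpp, hl₀', hl₀', hα', hcg1, map_zero, sub_self, add_zero]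

end approxAux

/-- Over a henselian Gorenstein local ring, given a short exact sequence
`0 → N → C → M → 0` with `C ∈ 𝒞(𝒳)` and `M, N ∈ rap 𝒳`, one has `M ∈ 𝒞(𝒳)`. -/
theorem stmt10 (R : Type u) [CommRing R] [IsNoetherianRing R] [IsLocalRing R]
    [HenselianLocalRing R] (hG : IsGorensteinLocalRing R)
    (𝒳 : Set (ModuleCat.{u} R)) (h𝒳 : IsResolving R 𝒳)
    (N C M : ModuleCat.{u} R) (hNfg : Module.Finite R N) (hCfg : Module.Finite R C)
    (hMfg : Module.Finite R M) (f : ↥N →ₗ[R] ↥C) (g : ↥C →ₗ[R] ↥M)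
    (hses : IsSES R f g) (hC : MemCC R 𝒳 C)
    (hM : HasRightApprox R 𝒳 M) (hN : HasRightApprox R 𝒳 N) :
    MemCC R 𝒳 M := by
  exact memCC_aux R 𝒳 h𝒳 N C M f g hses hC hM hN
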